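/- arXiv:1901.06951 — 2 statements merged into one kernel-verified Lean document; each statement's English description precedes it below -/
import Mathlib

section
/- Assume V ∈ C¹(ℝ^N), c ∈ ℝ, that condition (V^c) holds, and that the coercivity condition (1.7) holds. Then 0 < m_c < +∞. -/
open MeasureTheory Filter Metric Set Topology
open scoped ENNReal

noncomputable section

/-- Euclidean space `ℝ^N`. -/
abbrev Euc (N : ℕ) := EuclideanSpace ℝ (Fin N)

/-- Distance between two subsets of a metric space. -/
def setDist {E : Type*} [PseudoMetricSpace E] (A B : Set E) : ℝ :=
  sInf ((fun p : E × E => dist p.1 p.2) '' (A ×ˢ B))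

/-- `q ∈ H¹_loc(ℝ, ℝ^N)` with derivative `q'`: `q` is locally absolutely continuous with
locally square-integrable derivative `q'`. -/
def IsH1loc {N : ℕ} (q q' : ℝ → Euc N) : Prop :=
  LocallyIntegrable q' volume ∧
  (∀ a b : ℝ, IntegrableOn (fun t => ‖q' t‖ ^ 2) (Icc a b) volume) ∧
  (∀ a b : ℝ, q b - q a = ∫ t in a..b, q' t)

/-- The action `J_{c,I}(q) = ∫_I (½|q̇(t)|² + (V(q(t)) − c)) dt`, valued in `[0,+∞]`. -/
def lagJ {N : ℕ} (V : Euc N → ℝ) (c : ℝ) (q q' : ℝ → Euc N) (I : Set ℝ) : ℝ≥0∞ :=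
  ∫⁻ t in I, ENNReal.ofReal (2⁻¹ * ‖q' t‖ ^ 2 + (V (q t) - c))

/-- The admissible class `Γ_c` of pairs (function, derivative): `q ∈ H¹_loc`,
`V(q(t)) ≥ c` for all `t`, `liminf_{t→−∞} dist(q(t),𝒱⁻) = 0` and
`liminf_{t→+∞} dist(q(t),𝒱⁺) = 0`. -/
def Gamma {N : ℕ} (V : Euc N → ℝ) (c : ℝ) (Vm Vp : Set (Euc N)) :
    Set ((ℝ → Euc N) × (ℝ → Euc N)) :=
  {p | IsH1loc p.1 p.2 ∧ (∀ t, c ≤ V (p.1 t)) ∧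
    (∀ ε > 0, ∃ᶠ t in atBot, infDist (p.1 t) Vm < ε) ∧
    (∀ ε > 0, ∃ᶠ t in atTop, infDist (p.1 t) Vp < ε)}

/-- `m_c := inf_{q ∈ Γ_c} J_c(q)`. -/
def mc {N : ℕ} (V : Euc N → ℝ) (c : ℝ) (Vm Vp : Set (Euc N)) : ℝ≥0∞ :=
  ⨅ (p) (_ : p ∈ Gamma V c Vm Vp), lagJ V c p.1 p.2 univ

/-- Coercivity condition (1.7) for the constant `R`. -/
def Coercive {N : ℕ} (V : Euc N → ℝ) (c : ℝ) (Vm Vp : Set (Euc N)) (R : ℝ) : Prop :=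
  mc V c Vm Vp =
    ⨅ (p) (_ : p ∈ Gamma V c Vm Vp) (_ : ∀ t, ‖p.1 t‖ ≤ R), lagJ V c p.1 p.2 univ

lemma exists_gap (A B : Set ℝ) (hA : IsClosed A) (hB : IsClosed B) (t0 t1 : ℝ) (h : t0 ≤ t1)
    (h0 : t0 ∈ A) (h1 : t1 ∈ B) :
    ∃ a b, a ≤ b ∧ a ∈ A ∧ b ∈ B ∧ ∀ t ∈ Ioo a b, t ∉ A ∧ t ∉ B := by
  have c1 : IsCompact (Icc t0 t1 ∩ B) := isCompact_Icc.inter_right hB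
  obtain ⟨b, ⟨hb, hbB⟩, hbl⟩ := c1.exists_isLeast ⟨t1, ⟨h, le_rfl⟩, h1⟩
  have c2 : IsCompact (Icc t0 b ∩ A) := isCompact_Icc.inter_right hA
  obtain ⟨a, ⟨ha, haA⟩, hal⟩ := c2.exists_isGreatest ⟨t0, ⟨le_rfl, hb.1⟩, h0⟩
  refine ⟨a, b, ha.2, haA, hbB, fun t ht => ⟨fun ht' => ?_, fun ht' => ?_⟩⟩
  · exact absurd (hal ⟨⟨ha.1.trans ht.1.le, ht.2.le⟩, ht'⟩) (not_le.2 ht.1)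
  · exact absurd (hbl ⟨⟨ha.1.trans ht.1.le, ht.2.le.trans hb.2⟩, ht'⟩) (not_le.2 ht.2)

lemma clamp_integral {N : ℕ} (v : Euc N) (a b : ℝ) (hab : a ≤ b) (s u : ℝ) :
    (max a (min u b)) • v - (max a (min s b)) • v
      = ∫ t in s..u, (Ioo a b).indicator (fun _ => v) t := by
  symm
  have hc : Continuous (fun t : ℝ => (max a (min t b)) • v) := by fun_prop
  refine MeasureTheory.integral_eq_of_hasDerivAt_off_countable
    (fun t : ℝ => (max a (min t b)) • v) _ (s := {a, b}) ?_ hc.continuousOn ?_ ?_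
  · exact (Set.toFinite _).countable
  · rintro t ⟨-, ht⟩
    simp only [mem_insert_iff, mem_singleton_iff, not_or] at ht
    rcases lt_or_gt_of_ne ht.1 with h | h
    · rw [indicator_of_notMem (fun h' => absurd h'.1 (not_lt.2 h.le))]
      refine (hasDerivAt_const t (a • v)).congr_of_eventuallyEq ?_
      filter_upwards [Iio_mem_nhds h] with r hr
      rw [max_eq_left ((min_le_left _ _).trans (le_of_lt hr))]
    · rcases lt_or_gt_of_ne ht.2 with h2 | h2
      · rw [indicator_of_mem (show t ∈ Ioo a b from ⟨h, h2⟩)]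
        have h3 := (hasDerivAt_id t).smul_const v
        rw [one_smul] at h3
        refine h3.congr_of_eventuallyEq ?_
        filter_upwards [Ioo_mem_nhds h h2] with r hr
        rw [min_eq_left hr.2.le, max_eq_right hr.1.le]
        rfl
      · rw [indicator_of_notMem (fun h' => absurd h'.2 (not_lt.2 h2.le))]
        refine (hasDerivAt_const t (b • v)).congr_of_eventuallyEq ?_
        filter_upwards [Ioi_mem_nhds h2] with r hr
        rw [min_eq_right (le_of_lt hr), max_eq_right hab]
  · refine Integrable.intervalIntegrable ?_
    rw [integrable_indicator_iff measurableSet_Ioo]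
    exact integrableOn_const (by simp)

lemma setDist_le {N : ℕ} {Vm Vp : Set (Euc N)} {x y : Euc N} (hx : x ∈ Vm) (hy : y ∈ Vp) :
    setDist Vm Vp ≤ dist x y :=
  csInf_le ⟨0, by rintro _ ⟨p, -, rfl⟩; exact dist_nonneg⟩ ⟨(x, y), ⟨hx, hy⟩, rfl⟩

lemma setDist_nonempty {N : ℕ} {Vm Vp : Set (Euc N)} (hsep : 0 < setDist Vm Vp) :
    Vm.Nonempty ∧ Vp.Nonempty := by
  by_contra h
  rw [← Set.prod_nonempty_iff, not_nonempty_iff_eq_empty] at h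
  simp [setDist, h] at hsep

lemma H1_cont {N : ℕ} {q q' : ℝ → Euc N} (h : IsH1loc q q') : Continuous q := by
  have h1 : q = fun t => q 0 + ∫ s in (0:ℝ)..t, q' s := by
    ext1 t
    rw [← h.2.2 0 t]; abel
  rw [h1]
  refine continuous_const.add (intervalIntegral.continuous_primitive (fun a b => ?_) 0)
  exact (h.1.integrableOn_isCompact isCompact_uIcc).intervalIntegrable

lemma mc_lt_top {N : ℕ} (V : Euc N → ℝ) (hV : Continuous V)
    (c : ℝ) (Vm Vp : Set (Euc N)) (hVm : IsClosed Vm) (hVp : IsClosed Vp)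
    (hsplit : {x | V x ≤ c} = Vm ∪ Vp) (hsep : 0 < setDist Vm Vp) :
    mc V c Vm Vp < ⊤ := by
  obtain ⟨⟨x, hx⟩, ⟨y, hy⟩⟩ := setDist_nonempty hsep
  set g : ℝ → Euc N := fun t => x + t • (y - x) with hg
  have hgc : Continuous g := by fun_prop
  obtain ⟨a, b, hab, ha, hb, hgap⟩ := exists_gap (g ⁻¹' Vm) (g ⁻¹' Vp) (hVm.preimage hgc)
    (hVp.preimage hgc) 0 1 zero_le_one (by simpa [hg] using hx) (by simpa [hg] using hy)
  have hab' : a < b := by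
    refine lt_of_le_of_ne hab ?_
    rintro rfl
    have := setDist_le (Vm := Vm) (Vp := Vp) (x := g a) (y := g a) ha hb
    rw [dist_self] at this
    linarith
  have hle : ∀ z, V z ≤ c ↔ z ∈ Vm ∪ Vp := fun z => by rw [← hsplit]; rfl
  have hge : ∀ t ∈ Icc a b, c ≤ V (g t) := by
    intro t ht
    have : IsClosed {t | c ≤ V (g t)} := isClosed_le continuous_const (hV.comp hgc)
    rw [← closure_Ioo hab'.ne] at ht
    refine (closure_minimal ?_ this) ht
    intro t ht
    by_contra h
    rcases (hle (g t)).1 (not_le.1 h).le with h | h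
    exacts [(hgap t ht).1 h, (hgap t ht).2 h]
  have hVa : V (g a) = c := le_antisymm ((hle _).2 (Or.inl ha)) (hge a ⟨le_rfl, hab⟩)
  have hVb : V (g b) = c := le_antisymm ((hle _).2 (Or.inr hb)) (hge b ⟨hab, le_rfl⟩)
  set q : ℝ → Euc N := fun t => g (max a (min t b)) with hq
  set q' : ℝ → Euc N := (Ioo a b).indicator (fun _ => y - x) with hq'
  have hint : Integrable q' volume := by
    rw [hq', integrable_indicator_iff measurableSet_Ioo]
    exact integrableOn_const (by simp)
  have hmem : (q, q') ∈ Gamma V c Vm Vp := by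
    refine ⟨⟨hint.locallyIntegrable, fun s u => ?_, fun s u => ?_⟩, fun t => ?_, ?_, ?_⟩
    · have : (fun t => ‖q' t‖ ^ 2) = (Ioo a b).indicator (fun _ => ‖y - x‖ ^ 2) := by
        ext t
        by_cases ht : t ∈ Ioo a b <;> simp [hq', ht]
      show IntegrableOn (fun t => ‖q' t‖ ^ 2) _ _
      rw [this]
      refine Integrable.integrableOn ?_
      rw [integrable_indicator_iff measurableSet_Ioo]
      exact integrableOn_const (by simp)
    · show q u - q s = ∫ t in s..u, q' t
      rw [hq', ← clamp_integral _ _ _ hab]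
      simp [hq, hg]
    · exact hge _ ⟨le_max_left _ _, max_le hab (min_le_right _ _)⟩
    · intro ε hε
      refine Eventually.frequently ?_
      filter_upwards [eventually_le_atBot a] with t ht
      have : q t = g a := by
        simp only [hq]; rw [max_eq_left ((min_le_left _ _).trans ht)]
      show infDist (q t) Vm < ε
      rw [this, infDist_zero_of_mem (show g a ∈ Vm from ha)]; exact hε
    · intro ε hε
      refine Eventually.frequently ?_
      filter_upwards [eventually_ge_atTop b] with t ht
      have : q t = g b := by
        simp only [hq]; rw [min_eq_right ht, max_eq_right hab]
      show infDist (q t) Vp < ε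
      rw [this, infDist_zero_of_mem (show g b ∈ Vp from hb)]; exact hε
  refine lt_of_le_of_lt (iInf₂_le (q, q') hmem) ?_
  have hqc : Continuous q := by fun_prop
  obtain ⟨M, hM⟩ := isCompact_Icc.exists_bound_of_continuousOn (s := Icc a b)
    (f := fun t => 2⁻¹ * ‖y - x‖ ^ 2 + (V (q t) - c)) (by fun_prop)
  have hbd : ∀ t, ENNReal.ofReal (2⁻¹ * ‖q' t‖ ^ 2 + (V (q t) - c)) ≤
      (Ioo a b).indicator (fun _ => ENNReal.ofReal M) t := by
    intro t
    by_cases ht : t ∈ Ioo a b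
    · rw [indicator_of_mem ht]
      apply ENNReal.ofReal_le_ofReal
      have := hM t (Ioo_subset_Icc_self ht)
      simp only [hq', indicator_of_mem ht]
      exact (le_abs_self _).trans this
    · rw [indicator_of_notMem ht]
      have h1 : V (q t) = c := by
        rcases le_or_gt t a with h | h
        · have : q t = g a := by
            simp only [hq]; rw [max_eq_left ((min_le_left _ _).trans h)]
          rw [this, hVa]
        · have h2 : b ≤ t := by
            by_contra h3
            exact ht ⟨h, not_le.1 h3⟩
          have : q t = g b := by
            simp only [hq]; rw [min_eq_right h2, max_eq_right hab]
          rw [this, hVb]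
      simp [hq', indicator_of_notMem ht, h1]
  unfold lagJ
  refine lt_of_le_of_lt (lintegral_mono hbd) ?_
  rw [lintegral_indicator measurableSet_Ioo]
  simp [ENNReal.mul_lt_top_iff]

lemma mc_lower {N : ℕ} (V : Euc N → ℝ) (hV : Continuous V)
    (c : ℝ) (Vm Vp : Set (Euc N)) (hVm : IsClosed Vm) (hVp : IsClosed Vp)
    (hsplit : {x | V x ≤ c} = Vm ∪ Vp) (hsep : 0 < setDist Vm Vp) (R : ℝ) :
    ∃ k : ℝ≥0∞, 0 < k ∧ ∀ p ∈ Gamma V c Vm Vp, (∀ t, ‖p.1 t‖ ≤ R) → k ≤ lagJ V c p.1 p.2 univ := by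
  obtain ⟨hnm, hnp⟩ := setDist_nonempty hsep
  set d := setDist Vm Vp with hd
  have hle : ∀ z, V z ≤ c ↔ z ∈ Vm ∪ Vp := fun z => by rw [← hsplit]; rfl
  obtain ⟨μ, hμ, hK⟩ : ∃ μ > 0, ∀ x : Euc N, ‖x‖ ≤ R → d / 4 ≤ infDist x Vm →
      d / 4 ≤ infDist x Vp → μ ≤ V x - c := by
    set K : Set (Euc N) := closedBall 0 R ∩ ({x | d / 4 ≤ infDist x Vm} ∩
      {x | d / 4 ≤ infDist x Vp}) with hKdef
    have hKc : IsCompact K := (isCompact_closedBall _ _).inter_right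
      ((isClosed_le continuous_const (continuous_infDist_pt _)).inter
        (isClosed_le continuous_const (continuous_infDist_pt _)))
    rcases K.eq_empty_or_nonempty with h | h
    · refine ⟨1, one_pos, fun x h1 h2 h3 => ?_⟩
      have : x ∈ K := ⟨by simpa using h1, h2, h3⟩
      rw [h] at this
      exact this.elim
    · obtain ⟨z, hz, hmin⟩ := hKc.exists_isMinOn h hV.continuousOn
      refine ⟨V z - c, ?_, fun x h1 h2 h3 => ?_⟩
      · by_contra hc
        rcases (hle z).1 (by linarith) with h | h
        · have := hz.2.1
          simp only [mem_ofPred_eq, infDist_zero_of_mem h] at this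
          linarith
        · have := hz.2.2
          simp only [mem_ofPred_eq, infDist_zero_of_mem h] at this
          linarith
      · have : V z ≤ V x := hmin (show x ∈ K from ⟨by simpa using h1, h2, h3⟩)
        linarith
  set s := Real.sqrt (2 * μ) with hs
  have hs0 : 0 < s := Real.sqrt_pos.2 (by linarith)
  have hs2 : s ^ 2 = 2 * μ := Real.sq_sqrt (by linarith)
  refine ⟨ENNReal.ofReal s * ENNReal.ofReal (d / 4), ?_, ?_⟩
  · exact ENNReal.mul_pos (by simpa using hs0) (by simpa using hsep)
  rintro ⟨q, q'⟩ ⟨hH, -, hm, hp⟩ hR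
  simp only at hm hp hR hH ⊢
  have hqc := H1_cont hH
  obtain ⟨t0, ht0⟩ := (hm (d / 4) (by linarith)).exists
  obtain ⟨t1, ht1, h01⟩ := ((hp (d / 4) (by linarith)).and_eventually
    (eventually_ge_atTop t0)).exists
  obtain ⟨a, b, hab, ha, hb, hgap⟩ := exists_gap {t | infDist (q t) Vm ≤ d / 4}
    {t | infDist (q t) Vp ≤ d / 4}
    (isClosed_le ((continuous_infDist_pt _).comp hqc) continuous_const)
    (isClosed_le ((continuous_infDist_pt _).comp hqc) continuous_const) t0 t1 h01 ht0.le ht1.le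
  have hdist : d / 4 ≤ ‖q b - q a‖ := by
    obtain ⟨x, hx, hxa⟩ := (infDist_lt_iff hnm).1 (show infDist (q a) Vm < 3 * d / 8 by
      have : infDist (q a) Vm ≤ d / 4 := ha
      linarith)
    obtain ⟨y, hy, hyb⟩ := (infDist_lt_iff hnp).1 (show infDist (q b) Vp < 3 * d / 8 by
      have : infDist (q b) Vp ≤ d / 4 := hb
      linarith)
    have h1 : d ≤ dist x y := setDist_le hx hy
    have h2 := dist_triangle4 x (q a) (q b) y
    rw [dist_comm x (q a), dist_comm (q a) (q b), dist_eq_norm (q b)] at h2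
    linarith
  have hI : q b - q a = ∫ t in Ioo a b, q' t := by
    rw [hH.2.2 a b, intervalIntegral.integral_of_le hab, integral_Ioc_eq_integral_Ioo]
  have h1 : ENNReal.ofReal (d / 4) ≤ ∫⁻ t in Ioo a b, ‖q' t‖ₑ := by
    refine le_trans ?_ (enorm_integral_le_lintegral_enorm _)
    rw [← hI, ← ofReal_norm]
    exact ENNReal.ofReal_le_ofReal hdist
  calc ENNReal.ofReal s * ENNReal.ofReal (d / 4)
      ≤ ENNReal.ofReal s * ∫⁻ t in Ioo a b, ‖q' t‖ₑ := by gcongr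
    _ = ∫⁻ t in Ioo a b, ENNReal.ofReal s * ‖q' t‖ₑ :=
        (lintegral_const_mul' _ _ ENNReal.ofReal_ne_top).symm
    _ ≤ ∫⁻ t in Ioo a b, ENNReal.ofReal (2⁻¹ * ‖q' t‖ ^ 2 + (V (q t) - c)) := by
        refine setLIntegral_mono' measurableSet_Ioo fun t ht => ?_
        rw [← ofReal_norm, ← ENNReal.ofReal_mul hs0.le]
        apply ENNReal.ofReal_le_ofReal
        have h3 := hgap t ht
        have h4 := hK (q t) (hR t) (not_le.1 h3.1).le (not_le.1 h3.2).le
        nlinarith [sq_nonneg (‖q' t‖ - s)]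
    _ ≤ lagJ V c q q' univ := lintegral_mono_set (subset_univ _)

/-- Lemma 2.1: under (V^c) and coercivity (1.7), `0 < m_c < +∞`. -/
theorem mc_pos_and_finite {N : ℕ} (hN : 0 < N) (V : Euc N → ℝ) (hV : ContDiff ℝ 1 V)
    (c : ℝ) (Vm Vp : Set (Euc N)) (hVm : IsClosed Vm) (hVp : IsClosed Vp)
    (hsplit : {x | V x ≤ c} = Vm ∪ Vp) (hsep : 0 < setDist Vm Vp)
    (hcoer : ∃ R > 0, Coercive V c Vm Vp R) :
    0 < mc V c Vm Vp ∧ mc V c Vm Vp < ⊤ := by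
  refine ⟨?_, mc_lt_top V hV.continuous c Vm Vp hVm hVp hsplit hsep⟩
  obtain ⟨R, -, hR⟩ := hcoer
  obtain ⟨k, hk, hle⟩ := mc_lower V hV.continuous c Vm Vp hVm hVp hsplit hsep R
  rw [hR]
  exact hk.trans_le (le_iInf₂ fun p hp => le_iInf fun hb => hle p hp hb)
end
end

section
/- Assume V ∈ C¹(ℝ^N), c ∈ ℝ, and that condition (V^c) holds. If q ∈ Γ_c satisfies ‖q‖_{L^∞(ℝ,ℝ^N)} < +∞ and J_c(q) < +∞, then lim_{t→−∞} dist(q(t), 𝒱^c₋) = 0 and lim_{t→+∞} dist(q(t), 𝒱^c₊) = 0. -/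
open MeasureTheory Filter Metric Set Topology
open scoped ENNReal

noncomputable section

lemma crossing_aux {g : ℝ → ℝ} (hg : Continuous g) {s t α β : ℝ} (hst : s ≤ t)
    (hs : g s ≤ α) (hαβ : α < β) (ht : β ≤ g t) :
    ∃ a b, a ∈ Icc s t ∧ b ∈ Icc s t ∧ g a = α ∧ g b = β ∧
      ∀ τ ∈ uIcc a b, α ≤ g τ ∧ g τ ≤ β := by
  have hc1 : IsCompact (Icc s t ∩ {τ | β ≤ g τ}) :=
    isCompact_Icc.inter_right (isClosed_le continuous_const hg)
  obtain ⟨b, ⟨hb1, hb2⟩, hb3⟩ := hc1.exists_isLeast ⟨t, ⟨hst, le_rfl⟩, ht⟩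
  have hgb : g b = β := by
    obtain ⟨τ, hτ, hτ2⟩ := intermediate_value_Icc hb1.1 hg.continuousOn
      (show β ∈ Icc (g s) (g b) from ⟨by linarith, hb2⟩)
    have := hb3 ⟨⟨hτ.1, hτ.2.trans hb1.2⟩, hτ2.ge⟩
    rw [le_antisymm this hτ.2, hτ2]
  have hc2 : IsCompact (Icc s b ∩ {τ | g τ ≤ α}) :=
    isCompact_Icc.inter_right (isClosed_le hg continuous_const)
  obtain ⟨a, ⟨ha1, ha2⟩, ha3⟩ := hc2.exists_isGreatest ⟨s, ⟨le_rfl, hb1.1⟩, hs⟩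
  have hga : g a = α := by
    obtain ⟨τ, hτ, hτ2⟩ := intermediate_value_Icc ha1.2 hg.continuousOn
      (show α ∈ Icc (g a) (g b) from ⟨ha2, by linarith⟩)
    have := ha3 ⟨⟨ha1.1.trans hτ.1, hτ.2⟩, hτ2.le⟩
    rw [le_antisymm hτ.1 this, hτ2]
  refine ⟨a, b, ⟨ha1.1, ha1.2.trans hb1.2⟩, hb1, hga, hgb, fun τ hτ => ?_⟩
  rw [uIcc_of_le ha1.2] at hτ
  constructor
  · by_contra! h
    have := ha3 ⟨⟨ha1.1.trans hτ.1, hτ.2⟩, h.le⟩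
    have : τ = a := le_antisymm this hτ.1
    subst this; linarith
  · by_contra! h
    have := hb3 ⟨⟨ha1.1.trans hτ.1, hτ.2.trans hb1.2⟩, h.le⟩
    have : τ = b := le_antisymm hτ.2 this
    subst this; linarith

lemma crossing {g : ℝ → ℝ} (hg : Continuous g) {s t α β : ℝ}
    (hs : g s ≤ α) (hαβ : α < β) (ht : β ≤ g t) :
    ∃ a b, a ∈ uIcc s t ∧ b ∈ uIcc s t ∧ g a = α ∧ g b = β ∧
      ∀ τ ∈ uIcc a b, α ≤ g τ ∧ g τ ≤ β := by
  rcases le_total s t with h | h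
  · rw [uIcc_of_le h]; exact crossing_aux hg h hs hαβ ht
  · obtain ⟨a, b, ha, hb, hga, hgb, H⟩ := crossing_aux (g := fun x => g (-x))
      (s := -s) (t := -t) (by fun_prop) (by linarith) (by simpa using hs) hαβ (by simpa using ht)
    rw [uIcc_of_ge h]
    refine ⟨-a, -b, ⟨by linarith [ha.2], by linarith [ha.1]⟩,
      ⟨by linarith [hb.2], by linarith [hb.1]⟩, hga, hgb, fun τ hτ => ?_⟩
    have := H (-τ) (by
      rw [mem_uIcc] at hτ ⊢
      rcases hτ with hτ | hτ
      · right; constructor <;> linarith [hτ.1, hτ.2]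
      · left; constructor <;> linarith [hτ.1, hτ.2])
    simpa using this

lemma setDist_le_s2 {E : Type*} [PseudoMetricSpace E] {A B : Set E} {x y : E}
    (hx : x ∈ A) (hy : y ∈ B) : setDist A B ≤ dist x y :=
  csInf_le ⟨0, by rintro _ ⟨p, _, rfl⟩; exact dist_nonneg⟩ ⟨(x, y), ⟨hx, hy⟩, rfl⟩

lemma setDist_comm' {E : Type*} [PseudoMetricSpace E] (A B : Set E) :
    setDist A B = setDist B A := by
  unfold setDist
  congr 1
  ext r
  constructor
  · rintro ⟨⟨x, y⟩, ⟨hx, hy⟩, rfl⟩; exact ⟨(y, x), ⟨hy, hx⟩, dist_comm _ _⟩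
  · rintro ⟨⟨x, y⟩, ⟨hx, hy⟩, rfl⟩; exact ⟨(y, x), ⟨hy, hx⟩, dist_comm _ _⟩

lemma setDist_nonempty_s2 {E : Type*} [PseudoMetricSpace E] {A B : Set E}
    (h : 0 < setDist A B) : A.Nonempty ∧ B.Nonempty := by
  by_contra hc
  rw [← prod_nonempty_iff, not_nonempty_iff_eq_empty] at hc
  simp [setDist, hc] at h

lemma one_side {N : ℕ} (V : Euc N → ℝ) (hV : Continuous V)
    (c : ℝ) (A B : Set (Euc N)) (hA : IsClosed A)
    (hsplit : {x | V x ≤ c} = A ∪ B) (hsep : 0 < setDist A B)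
    (q q' : ℝ → Euc N) (hqc : Continuous q)
    (hq' : ∀ a b, IntervalIntegrable q' volume a b)
    (hFTC : ∀ a b : ℝ, q b - q a = ∫ t in a..b, q' t)
    (hbdd : ∃ M : ℝ, ∀ t, ‖q t‖ ≤ M)
    (hf : Integrable (fun t => 2⁻¹ * ‖q' t‖ ^ 2 + (V (q t) - c)))
    (l : Filter ℝ) (hl : ∀ S ∈ l, ∃ S' ∈ l, S' ⊆ S ∧ OrdConnected S')
    (L : ℝ) (hlim : Tendsto (fun x => ∫ t in (0:ℝ)..x, (2⁻¹ * ‖q' t‖ ^ 2 + (V (q t) - c))) l (𝓝 L))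
    (hfreq : ∀ ε > 0, ∃ᶠ t in l, infDist (q t) A < ε) :
    Tendsto (fun t => infDist (q t) A) l (𝓝 0) := by
  obtain ⟨M, hM⟩ := hbdd
  obtain ⟨hAne, hBne⟩ := setDist_nonempty_s2 hsep
  set δ := setDist A B with hδ
  rw [Metric.tendsto_nhds]
  intro ε₀ hε₀
  by_contra hcon
  rw [not_eventually] at hcon
  set ε := min (ε₀ / 2) (δ / 4) with hε
  have hεpos : 0 < ε := by positivity
  have hε1 : 2 * ε ≤ ε₀ := by have := min_le_left (ε₀ / 2) (δ / 4); linarith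
  have hε2 : 2 * ε < δ := by have := min_le_right (ε₀ / 2) (δ / 4); linarith
  -- lower bound for the potential on the shell
  obtain ⟨η, hη, hshell⟩ : ∃ η > 0, ∀ x : Euc N, ‖x‖ ≤ M → ε ≤ infDist x A →
      infDist x A ≤ 2 * ε → η ≤ V x - c := by
    set K : Set (Euc N) := closedBall 0 M ∩ {x | ε ≤ infDist x A ∧ infDist x A ≤ 2 * ε} with hK
    have hKc : IsCompact K := (isCompact_closedBall 0 M).inter_right
      ((isClosed_le continuous_const (continuous_infDist_pt A)).inter
        (isClosed_le (continuous_infDist_pt A) continuous_const))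
    have hpos : ∀ x ∈ K, 0 < V x - c := by
      rintro x ⟨_, h1, h2⟩
      by_contra! h
      have hx : x ∈ A ∪ B := by rw [← hsplit]; show V x ≤ c; linarith
      rcases hx with hx | hx
      · rw [infDist_zero_of_mem hx] at h1; linarith
      · have : δ ≤ infDist x A := by
          rw [le_infDist hAne]
          intro y hy
          rw [dist_comm]; exact setDist_le_s2 hy hx
        linarith
    rcases K.eq_empty_or_nonempty with h0 | hne
    · refine ⟨1, one_pos, fun x h1 h2 h3 => ?_⟩
      have : x ∈ K := ⟨by simpa using h1, h2, h3⟩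
      simp [h0] at this
    · obtain ⟨x₀, hx₀, hmin⟩ := hKc.exists_isMinOn hne
        (f := fun x => V x - c) (by fun_prop)
      exact ⟨V x₀ - c, hpos x₀ hx₀, fun x h1 h2 h3 => hmin ⟨by simpa using h1, h2, h3⟩⟩
  set r := √(2 * η) with hr
  have hrpos : 0 < r := Real.sqrt_pos.2 (by positivity)
  have hr2 : r ^ 2 = 2 * η := Real.sq_sqrt (by positivity)
  have hκ : 0 < r * ε / 2 := by positivity
  have hev := Metric.tendsto_nhds.1 hlim _ hκ
  obtain ⟨S, hSl, hSsub, hSc⟩ := hl _ hev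
  obtain ⟨s, hs1, hs2⟩ := ((hfreq ε hεpos).and_eventually hSl).exists
  obtain ⟨t, ht1, ht2⟩ := (hcon.and_eventually hSl).exists
  have hgt : 2 * ε ≤ infDist (q t) A := by
    rw [Real.dist_eq, sub_zero, abs_of_nonneg infDist_nonneg] at ht1
    linarith
  obtain ⟨a, b, ha, hb, hga, hgb, H⟩ := crossing (g := fun t => infDist (q t) A)
    ((continuous_infDist_pt A).comp hqc) hs1.le (by linarith : ε < 2 * ε) hgt
  have haS := hSsub (hSc.uIcc_subset hs2 ht2 ha)
  have hbS := hSsub (hSc.uIcc_subset hs2 ht2 hb)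
  set f : ℝ → ℝ := fun t => 2⁻¹ * ‖q' t‖ ^ 2 + (V (q t) - c) with hfdef
  have hfi : ∀ x y, IntervalIntegrable f volume x y := fun x y => hf.intervalIntegrable
  have hab : |∫ t in a..b, f t| < r * ε := by
    rw [← intervalIntegral.integral_interval_sub_left (hfi 0 b) (hfi 0 a)]
    simp only [mem_ofPred_eq, Real.dist_eq] at haS hbS
    rw [abs_lt] at haS hbS ⊢
    constructor <;> linarith [haS.1, haS.2, hbS.1, hbS.2]
  have h1 : ε ≤ ‖q b - q a‖ := by
    have := infDist_le_infDist_add_dist (s := A) (x := q b) (y := q a)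
    rw [dist_eq_norm] at this
    linarith
  have h2 : r * ‖q b - q a‖ ≤ |∫ t in a..b, f t| := by
    have hsub : ∀ t ∈ uIoc a b, r * ‖q' t‖ ≤ f t := by
      intro t ht
      have h := H t (uIoc_subset_uIcc ht)
      have := hshell (q t) (hM t) h.1 h.2
      simp only [hfdef]
      nlinarith [sq_nonneg (‖q' t‖ - r)]
    rw [hFTC a b]
    calc r * ‖∫ t in a..b, q' t‖ ≤ r * ∫ t in uIoc a b, ‖q' t‖ := by
          gcongr; exact intervalIntegral.norm_integral_le_integral_norm_uIoc
      _ = ∫ t in uIoc a b, r * ‖q' t‖ := (integral_const_mul _ _).symm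
      _ ≤ ∫ t in uIoc a b, f t := by
          apply setIntegral_mono_on _ hf.integrableOn measurableSet_uIoc hsub
          exact ((intervalIntegrable_iff.1 (hq' a b)).norm).const_mul r
      _ ≤ |∫ t in uIoc a b, f t| := le_abs_self _
      _ = |∫ t in a..b, f t| := (intervalIntegral.abs_integral_eq_abs_integral_uIoc f).symm
  nlinarith

/-- Lemma 2.2: bounded finite-action elements of `Γ_c` approach `𝒱⁻` and `𝒱⁺` asymptotically. -/
theorem limits_of_finite_action {N : ℕ} (hN : 0 < N) (V : Euc N → ℝ) (hV : ContDiff ℝ 1 V)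
    (c : ℝ) (Vm Vp : Set (Euc N)) (hVm : IsClosed Vm) (hVp : IsClosed Vp)
    (hsplit : {x | V x ≤ c} = Vm ∪ Vp) (hsep : 0 < setDist Vm Vp)
    (q q' : ℝ → Euc N) (hq : (q, q') ∈ Gamma V c Vm Vp)
    (hbdd : ∃ M : ℝ, ∀ t, ‖q t‖ ≤ M)
    (hJ : lagJ V c q q' univ < ⊤) :
    Tendsto (fun t => infDist (q t) Vm) atBot (𝓝 0) ∧
    Tendsto (fun t => infDist (q t) Vp) atTop (𝓝 0) := by
  obtain ⟨⟨hloc, _, hFTC⟩, hVc, hm, hp⟩ := hq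
  simp only at hloc hFTC hVc hm hp
  have hq' : ∀ a b, IntervalIntegrable q' volume a b := fun a b =>
    (hloc.integrableOn_isCompact isCompact_uIcc).intervalIntegrable
  have hqc : Continuous q := by
    have h := intervalIntegral.continuous_primitive hq' 0
    have : q = fun b => q 0 + ∫ t in (0:ℝ)..b, q' t := by
      ext1 b; rw [← hFTC 0 b]; abel
    rw [this]
    exact continuous_const.add h
  have hVcont : Continuous V := hV.continuous
  have hf : Integrable (fun t => 2⁻¹ * ‖q' t‖ ^ 2 + (V (q t) - c)) := by
    refine ⟨?_, ?_⟩
    · exact ((hloc.aestronglyMeasurable.norm.pow 2).const_mul _).add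
        ((hVcont.comp hqc).sub continuous_const).aestronglyMeasurable
    · rw [hasFiniteIntegral_iff_ofReal]
      · simpa [lagJ] using hJ
      · refine Eventually.of_forall fun t => ?_
        have := hVc t
        have : 0 ≤ V (q t) - c := by linarith
        show (0:ℝ) ≤ _
        positivity
  constructor
  · refine one_side V hVcont c Vm Vp hVm hsplit hsep q q' hqc hq' hFTC hbdd hf atBot ?_
      (-∫ t in Iic (0:ℝ), (2⁻¹ * ‖q' t‖ ^ 2 + (V (q t) - c))) ?_ hm
    · intro S hS
      obtain ⟨T, hT⟩ := mem_atBot_sets.1 hS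
      exact ⟨Iic T, Iic_mem_atBot T, hT, ordConnected_Iic⟩
    · simp_rw [intervalIntegral.integral_symm _ (0:ℝ)]
      exact (intervalIntegral_tendsto_integral_Iic 0 hf.integrableOn tendsto_id).neg
  · refine one_side V hVcont c Vp Vm hVp (by rw [hsplit, union_comm])
      (by rwa [setDist_comm']) q q' hqc hq' hFTC hbdd hf atTop ?_
      (∫ t in Ioi (0:ℝ), (2⁻¹ * ‖q' t‖ ^ 2 + (V (q t) - c))) ?_ hp
    · intro S hS
      obtain ⟨T, hT⟩ := mem_atTop_sets.1 hS
      exact ⟨Ici T, Ici_mem_atTop T, hT, ordConnected_Ici⟩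
    · exact intervalIntegral_tendsto_integral_Ioi 0 hf.integrableOn tendsto_id
end
end
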